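/- Under the standing assumption, for every E ∈ ℝ and every N ≥ 1 the operator a_N^E + i b_N^E is invertible, so the Prüfer phase U_N^E = (a_N^E − i b_N^E)(a_N^E + i b_N^E)⁻¹ is well defined, and U_N^E is a unitary operator on H. -/

import Mathlib

open ContinuousLinearMap

noncomputable section

variable {H : Type*} [NormedAddCommGroup H] [InnerProductSpace ℂ H] [CompleteSpace H]

/-- The Hilbert space `K = H ⊕ H` (with the `ℓ²` product norm). -/
abbrev Kspace (H : Type*) [NormedAddCommGroup H] [InnerProductSpace ℂ H] : Type _ :=
  WithLp 2 (H × H)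

/-- The block operator `[[A,B],[C,D]]` on `K`, acting by `(x,y) ↦ (Ax + By, Cx + Dy)`. -/
def blockOp (A B C D : H →L[ℂ] H) : Kspace H →L[ℂ] Kspace H :=
  (((WithLp.prodContinuousLinearEquiv 2 ℂ H H).symm : (H × H) →L[ℂ] Kspace H)) ∘L
    (((A ∘L ContinuousLinearMap.fst ℂ H H) + (B ∘L ContinuousLinearMap.snd ℂ H H)).prod
      ((C ∘L ContinuousLinearMap.fst ℂ H H) + (D ∘L ContinuousLinearMap.snd ℂ H H))) ∘L
    (((WithLp.prodContinuousLinearEquiv 2 ℂ H H) : Kspace H →L[ℂ] H × H))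

/-- Upper-left block of an operator on `K`. -/
def blkA (M : Kspace H →L[ℂ] Kspace H) : H →L[ℂ] H :=
  ContinuousLinearMap.fst ℂ H H ∘L
    ((WithLp.prodContinuousLinearEquiv 2 ℂ H H) : Kspace H →L[ℂ] H × H) ∘L M ∘L
    ((WithLp.prodContinuousLinearEquiv 2 ℂ H H).symm : (H × H) →L[ℂ] Kspace H) ∘L
    ContinuousLinearMap.inl ℂ H H

/-- Upper-right block of an operator on `K`. -/
def blkB (M : Kspace H →L[ℂ] Kspace H) : H →L[ℂ] H :=
  ContinuousLinearMap.fst ℂ H H ∘L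
    ((WithLp.prodContinuousLinearEquiv 2 ℂ H H) : Kspace H →L[ℂ] H × H) ∘L M ∘L
    ((WithLp.prodContinuousLinearEquiv 2 ℂ H H).symm : (H × H) →L[ℂ] Kspace H) ∘L
    ContinuousLinearMap.inr ℂ H H

/-- Lower-left block of an operator on `K`. -/
def blkC (M : Kspace H →L[ℂ] Kspace H) : H →L[ℂ] H :=
  ContinuousLinearMap.snd ℂ H H ∘L
    ((WithLp.prodContinuousLinearEquiv 2 ℂ H H) : Kspace H →L[ℂ] H × H) ∘L M ∘L
    ((WithLp.prodContinuousLinearEquiv 2 ℂ H H).symm : (H × H) →L[ℂ] Kspace H) ∘L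
    ContinuousLinearMap.inl ℂ H H

/-- Lower-right block of an operator on `K`. -/
def blkD (M : Kspace H →L[ℂ] Kspace H) : H →L[ℂ] H :=
  ContinuousLinearMap.snd ℂ H H ∘L
    ((WithLp.prodContinuousLinearEquiv 2 ℂ H H) : Kspace H →L[ℂ] H × H) ∘L M ∘L
    ((WithLp.prodContinuousLinearEquiv 2 ℂ H H).symm : (H × H) →L[ℂ] Kspace H) ∘L
    ContinuousLinearMap.inr ℂ H H

/-- The Cayley transform `C = (1/√2)[[1, -i],[1, i]]`. -/
def Cayley (H : Type*) [NormedAddCommGroup H] [InnerProductSpace ℂ H] [CompleteSpace H] :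
    Kspace H →L[ℂ] Kspace H :=
  blockOp (((Real.sqrt 2 : ℂ)⁻¹) • 1) ((-((Real.sqrt 2 : ℂ)⁻¹ * Complex.I)) • 1)
    (((Real.sqrt 2 : ℂ)⁻¹) • 1) ((((Real.sqrt 2 : ℂ)⁻¹ * Complex.I)) • 1)

/-- The transfer operator `M^E = [[(E − V)T⁻¹, −T*],[T⁻¹, 0]]`, where the inverse `T⁻¹`
is given as the operator `Tinv`. -/
def transferOp (E : ℝ) (V T Tinv : H →L[ℂ] H) : Kspace H →L[ℂ] Kspace H :=
  blockOp ((((E : ℂ) • (1 : H →L[ℂ] H)) - V) ∘L Tinv) (-(adjoint T)) Tinv 0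

/-- The product of transfer operators `M_N^E ⋯ M_1^E` (empty product for `N = 0`). -/
def transferProd (V T Tinv : ℕ → H →L[ℂ] H) (E : ℝ) : ℕ → (Kspace H →L[ℂ] Kspace H)
  | 0 => 1
  | n + 1 => transferOp E (V (n + 1)) (T (n + 1)) (Tinv (n + 1)) ∘L transferProd V T Tinv E n

/-- `a_N^E`: the upper-left block of `M_N^E ⋯ M_1^E`, so that
`(a_N^E x, b_N^E x) = M_N^E ⋯ M_1^E (x, 0)`. -/
def pruferA (V T Tinv : ℕ → H →L[ℂ] H) (N : ℕ) (E : ℝ) : H →L[ℂ] H :=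
  blkA (transferProd V T Tinv E N)

/-- `b_N^E`: the lower-left block of `M_N^E ⋯ M_1^E`. -/
def pruferB (V T Tinv : ℕ → H →L[ℂ] H) (N : ℕ) (E : ℝ) : H →L[ℂ] H :=
  blkC (transferProd V T Tinv E N)

/-- The Prüfer phase `U_N^E = (a_N^E − i b_N^E)(a_N^E + i b_N^E)⁻¹`. -/
def pruferU (V T Tinv : ℕ → H →L[ℂ] H) (N : ℕ) (E : ℝ) : H →L[ℂ] H :=
  (pruferA V T Tinv N E - Complex.I • pruferB V T Tinv N E) *
    Ring.inverse (pruferA V T Tinv N E + Complex.I • pruferB V T Tinv N E)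

theorem prufer_mul_apply (X Y : H →L[ℂ] H) (x : H) : (X * Y) x = X (Y x) := rfl

/-- Data carried along by the recursion. -/
structure PruferInv (a b : H →L[ℂ] H) : Prop where
  comm : adjoint a * b = adjoint b * a
  left : ∃ p q : H →L[ℂ] H, p * a + q * b = 1
  lagr : ∀ u v : H, adjoint a v = adjoint b u → ∃ x, a x = u ∧ b x = v

theorem PruferInv.neg {a b : H →L[ℂ] H} (h : PruferInv a b) : PruferInv a (-b) := by
  obtain ⟨p, q, hpq⟩ := h.left
  refine ⟨by simp [h.comm], ⟨p, -q, by simp [hpq]⟩, ?_⟩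
  intro u v huv
  obtain ⟨x, hx, hx'⟩ := h.lagr u (-v) (by simp [huv])
  exact ⟨x, hx, by simp [hx']⟩

theorem PruferInv.base : PruferInv (1 : H →L[ℂ] H) 0 := by
  refine ⟨by simp, ⟨1, 0, by simp⟩, ?_⟩
  intro u v huv
  refine ⟨u, rfl, ?_⟩
  have h1 : adjoint (1 : H →L[ℂ] H) = 1 := star_one _
  rw [h1] at huv
  simpa using huv.symm

theorem PruferInv.step {a b S T R : H →L[ℂ] H} (h : PruferInv a b) (hS : adjoint S = S)
    (hTR : T * R = 1) (hRT : R * T = 1) :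
    PruferInv (S * R * a - adjoint T * b) (R * a) := by
  have e1 : adjoint R * adjoint T = 1 := by
    have := congrArg star hTR
    simpa [star_mul, star_eq_adjoint] using this
  have e2 : adjoint T * adjoint R = 1 := by
    have := congrArg star hRT
    simpa [star_mul, star_eq_adjoint] using this
  have am : ∀ X Y : H →L[ℂ] H, adjoint (X * Y) = adjoint Y * adjoint X := fun X Y => star_mul X Y
  refine ⟨?_, ?_, ?_⟩
  · simp only [map_sub, am, adjoint_adjoint, hS, sub_mul, mul_sub]
    have h1 : adjoint b * T * (R * a) = adjoint b * a := by
      rw [mul_assoc, ← mul_assoc T, hTR, one_mul]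
    have h2 : adjoint a * adjoint R * (adjoint T * b) = adjoint a * b := by
      rw [mul_assoc, ← mul_assoc (adjoint R), e1, one_mul]
    rw [h1, h2, h.comm]
    simp only [mul_assoc]
  · obtain ⟨p, q, hpq⟩ := h.left
    refine ⟨-(q * adjoint R), p * T + q * adjoint R * S, ?_⟩
    have h2 : q * adjoint R * (adjoint T * b) = q * b := by
      rw [mul_assoc, ← mul_assoc (adjoint R), e1, one_mul]
    have h1 : p * T * (R * a) = p * a := by
      rw [mul_assoc, ← mul_assoc T, hTR, one_mul]
    rw [neg_mul, mul_sub, h2, add_mul, h1, ← hpq]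
    simp only [mul_assoc]
    abel
  · intro u v huv
    have := h.lagr (T v) (adjoint R (S v - u)) (by
      simp only [map_sub, am, hS, adjoint_adjoint, sub_apply, prufer_mul_apply] at huv ⊢
      rw [← huv]; abel)
    obtain ⟨x, hx, hx'⟩ := this
    have f1 : R (T v) = v := DFunLike.congr_fun hRT v
    have f2 : adjoint T (adjoint R (S v - u)) = S v - u := DFunLike.congr_fun e2 _
    refine ⟨x, ?_, ?_⟩
    · simp only [sub_apply, prufer_mul_apply, hx, hx', f1, f2]; abel
    · simp only [prufer_mul_apply, hx, f1]

theorem PruferInv.gram {a b : H →L[ℂ] H} (h : PruferInv a b) :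
    adjoint (a + Complex.I • b) * (a + Complex.I • b) = adjoint a * a + adjoint b * b := by
  simp only [map_add, map_smulₛₗ, add_mul, mul_add, smul_mul_assoc, mul_smul_comm, h.comm, smul_smul,
    smul_add, Complex.conj_I]
  simp

theorem PruferInv.normeq {a b : H →L[ℂ] H} (h : PruferInv a b) (x : H) :
    ‖a x + Complex.I • b x‖ = ‖a x - Complex.I • b x‖ := by
  have key : ∀ w : H →L[ℂ] H, ‖w x‖ ^ 2 = RCLike.re (inner ℂ ((adjoint w * w) x) x) := by
    intro w
    rw [prufer_mul_apply, adjoint_inner_left, inner_self_eq_norm_sq]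
  have h1 := key (a + Complex.I • b)
  have h2 := key (a + Complex.I • (-b))
  rw [h.gram] at h1
  rw [h.neg.gram] at h2
  simp only [map_neg, neg_mul_neg] at h2
  rw [← h1] at h2
  have := (sq_eq_sq₀ (norm_nonneg _) (norm_nonneg _)).1 h2
  simpa [sub_eq_add_neg] using this.symm

theorem PruferInv.isUnit {a b : H →L[ℂ] H} (h : PruferInv a b) :
    IsUnit (a + Complex.I • b) := by
  rw [ContinuousLinearMap.isUnit_iff_bijective,
    ContinuousLinearMap.bijective_iff_dense_range_and_antilipschitz]
  have hle : ∀ x, ‖a x‖ ≤ ‖a x + Complex.I • b x‖ ∧ ‖b x‖ ≤ ‖a x + Complex.I • b x‖ := by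
    intro x
    have hn := h.normeq x
    constructor
    · have h2 : (2 : ℂ) • a x = (a x + Complex.I • b x) + (a x - Complex.I • b x) := by
        rw [two_smul]; abel
      have h3 := norm_add_le (a x + Complex.I • b x) (a x - Complex.I • b x)
      rw [← h2, norm_smul, ← hn] at h3
      norm_num at h3
      linarith
    · have h2 : (2 : ℂ) • Complex.I • b x = (a x + Complex.I • b x) - (a x - Complex.I • b x) := by
        rw [two_smul]; abel
      have h3 := norm_sub_le (a x + Complex.I • b x) (a x - Complex.I • b x)
      rw [← h2, norm_smul, ← hn, norm_smul] at h3
      norm_num at h3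
      linarith
  constructor
  · rw [Submodule.topologicalClosure_eq_top_iff, Submodule.eq_bot_iff]
    intro y hy
    have hy0 : adjoint (a + Complex.I • b) y = 0 := by
      refine ext_inner_left ℂ fun z => ?_
      rw [adjoint_inner_right, inner_zero_right]
      exact (Submodule.mem_orthogonal _ _).1 hy _ ⟨z, rfl⟩
    have hy1 : adjoint a y = adjoint b (Complex.I • y) := by
      simp only [map_add, map_smulₛₗ, add_apply, smul_apply, Complex.conj_I] at hy0
      rw [map_smul]
      have := eq_neg_of_add_eq_zero_left hy0
      simpa using this
    obtain ⟨x, hx, hx'⟩ := h.lagr _ _ hy1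
    have hn := h.normeq x
    rw [hx, hx', sub_self, norm_zero, ← two_smul ℂ, smul_smul] at hn
    have := norm_eq_zero.1 hn
    simpa using this
  · obtain ⟨p, q, hpq⟩ := h.left
    refine ⟨‖p‖₊ + ‖q‖₊, ?_⟩
    refine AddMonoidHomClass.antilipschitz_of_bound _ fun x => ?_
    have hx : p (a x) + q (b x) = x := DFunLike.congr_fun hpq x
    obtain ⟨h1, h2⟩ := hle x
    calc ‖x‖ = ‖p (a x) + q (b x)‖ := by rw [hx]
      _ ≤ ‖p (a x)‖ + ‖q (b x)‖ := norm_add_le _ _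
      _ ≤ ‖p‖ * ‖a x‖ + ‖q‖ * ‖b x‖ := add_le_add (p.le_opNorm _) (q.le_opNorm _)
      _ ≤ ‖p‖ * ‖a x + Complex.I • b x‖ + ‖q‖ * ‖a x + Complex.I • b x‖ := by gcongr
      _ = _ := by simp [add_mul]

theorem PruferInv.unitary {a b : H →L[ℂ] H} (h : PruferInv a b) :
    (a - Complex.I • b) * Ring.inverse (a + Complex.I • b) ∈ unitary (H →L[ℂ] H) := by
  have hg : star (a - Complex.I • b) * (a - Complex.I • b)
      = star (a + Complex.I • b) * (a + Complex.I • b) := by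
    have h1 := h.gram
    have h2 := h.neg.gram
    simp only [map_neg adjoint, neg_mul_neg, smul_neg, ← sub_eq_add_neg] at h2
    rw [star_eq_adjoint, star_eq_adjoint, h1, h2]
  have hu := h.isUnit
  have hu' : IsUnit (a - Complex.I • b) := by simpa [sub_eq_add_neg] using h.neg.isUnit
  have hU : IsUnit ((a - Complex.I • b) * Ring.inverse (a + Complex.I • b)) :=
    hu'.mul hu.ringInverse
  have h1 : star ((a - Complex.I • b) * Ring.inverse (a + Complex.I • b)) *
      ((a - Complex.I • b) * Ring.inverse (a + Complex.I • b)) = 1 := by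
    rw [star_mul, mul_assoc, ← mul_assoc (star (a - Complex.I • b)), hg, mul_assoc,
      Ring.mul_inverse_cancel _ hu, mul_one, ← star_mul, Ring.mul_inverse_cancel _ hu, star_one]
  exact hU.mem_unitary_of_star_mul_self h1

theorem pruferInv_all (V T Tinv : ℕ → H →L[ℂ] H)
    (hV : ∀ n, 1 ≤ n → IsSelfAdjoint (V n))
    (hT : ∀ n, 1 ≤ n → T n ∘L Tinv n = 1 ∧ Tinv n ∘L T n = 1) (E : ℝ) (N : ℕ) :
    PruferInv (pruferA V T Tinv N E) (pruferB V T Tinv N E) := by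
  induction N with
  | zero =>
    convert PruferInv.base (H := H) using 1
    · ext x
      simp [pruferA, transferProd, blkA]
    · ext x
      simp [pruferB, transferProd, blkC]
  | succ n ih =>
    have hS : adjoint (((E : ℂ) • (1 : H →L[ℂ] H)) - V (n + 1))
        = ((E : ℂ) • (1 : H →L[ℂ] H)) - V (n + 1) := by
      have h1 : adjoint (1 : H →L[ℂ] H) = 1 := star_one _
      have h2 : adjoint (V (n + 1)) = V (n + 1) := hV (n + 1) (by omega)
      rw [map_sub, map_smulₛₗ, h1, h2, Complex.conj_ofReal]
    obtain ⟨t1, t2⟩ := hT (n + 1) (by omega)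
    convert ih.step hS t1 t2 using 1
    · ext x
      simp [pruferA, pruferB, transferProd, transferOp, blkA, blkC, blockOp, sub_eq_add_neg]
    · ext x
      simp [pruferA, pruferB, transferProd, transferOp, blkA, blkC, blockOp]

/-- Under the standing assumption, for every `E ∈ ℝ` and `N ≥ 1` the operator
`a_N^E + i b_N^E` is invertible, so the Prüfer phase
`U_N^E = (a_N^E − i b_N^E)(a_N^E + i b_N^E)⁻¹` is well defined, and it is unitary. -/
theorem pruferU_unitary (V T Tinv : ℕ → H →L[ℂ] H) (Λ : ℝ)
    (hV : ∀ n, 1 ≤ n → IsSelfAdjoint (V n))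
    (hT : ∀ n, 1 ≤ n → T n ∘L Tinv n = 1 ∧ Tinv n ∘L T n = 1)
    (hT1 : T 1 = 1) (hTinv1 : Tinv 1 = 1)
    (hΛ : ∀ n, 1 ≤ n → ‖T n‖ ≤ Λ ∧ ‖Tinv n‖ ≤ Λ ∧ ‖V n‖ ≤ Λ)
    (E : ℝ) (N : ℕ) (hN : 1 ≤ N) :
    IsUnit (pruferA V T Tinv N E + Complex.I • pruferB V T Tinv N E) ∧
    pruferU V T Tinv N E ∈ unitary (H →L[ℂ] H) := by
  have h := pruferInv_all V T Tinv hV hT E N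
  exact ⟨h.isUnit, h.unitary⟩
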